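/- For every k ≥ 1 and n ≥ 0, the number of standard Young tableaux of the rectangular shape with k rows each of length n equals (1!·2!·⋯·(k-1)!)·(nk)! / (n!·(n+1)!·⋯·(n+k-1)!). -/

import Mathlib

/-!
The proof goes through Aitken's determinantal formula: the number of standard tableaux of any
shape `μ` with `k` rows and `N` cells is `N! * det (1 / (μ i - i + j)!)`, with `1 / m! = 0` for
negative `m` (`card_fillings_eq_aitken`). It is proved by induction on `N`, both sides obeying
the same branching rule.

* Deleting the cell of the largest entry shows that the number of tableaux of shape `μ` is the sum
  of the numbers for the shapes obtained by deleting a corner (`card_fillings`). To make this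
  deletion easy, a tableau is replaced by the list of its cells in increasing order of entries
  (`sytCount_eq_card_fillings`).
* Lowering `μ i` by one multiplies the `(i, j)` entry of the determinant by `μ i - i + j`, because
  `1 / (m - 1)! = m / m!` holds for all integers `m` in the above convention. In the Leibniz
  expansion, summing over the row `i` gives each term the factor `∑ i, (μ i - i + σ i) = N`
  (`sum_aitken_update`). The rows without a corner contribute zero, since lowering them produces
  two equal rows or a zero row.

For the rectangle, extracting `1 / (n + i)!` from the rows leaves a matrix of falling factorials of
consecutive integers, whose determinant is a Vandermonde determinant equal to the
superfactorial `0! * 1! * ⋯ * (k - 1)!` (`aitken_const`).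
-/

/-- The set of cells of the Young diagram with row lengths `L`:
`(i, j)` is a cell iff `j < L[i]`. -/
def cells (L : List ℕ) : Finset (ℕ × ℕ) :=
  (Finset.range L.length ×ˢ Finset.range (L.foldr max 0)).filter
    (fun p => p.2 < L.getD p.1 0)

/-- `f` is a standard Young tableau of shape `L`: a bijective filling of the cells
with `1,…,n` (modeled as `Fin L.sum`), strictly increasing along each row
(left-to-right) and each column (top-to-bottom). -/
def IsSYT (L : List ℕ) (f : cells L → Fin L.sum) : Prop :=
  Function.Bijective f ∧
  (∀ a b : cells L, (↑a : ℕ × ℕ).1 = (↑b : ℕ × ℕ).1 →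
      (↑a : ℕ × ℕ).2 < (↑b : ℕ × ℕ).2 → f a < f b) ∧
  (∀ a b : cells L, (↑a : ℕ × ℕ).2 = (↑b : ℕ × ℕ).2 →
      (↑a : ℕ × ℕ).1 < (↑b : ℕ × ℕ).1 → f a < f b)

/-- The number of standard Young tableaux of shape `L`. -/
noncomputable def sytCount (L : List ℕ) : ℕ := Nat.card {f : cells L → Fin L.sum // IsSYT L f}

open Finset

/-! ### Aitken's determinant -/

/-- The reciprocal factorial `1 / m!` extended to the integers by zero at negative arguments.
With this convention `invFact (m - 1) = m * invFact m` holds for every integer `m`. -/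
def invFact (m : ℤ) : ℚ := if 0 ≤ m then 1 / (m.toNat.factorial : ℚ) else 0

lemma invFact_natCast (m : ℕ) : invFact (m : ℤ) = 1 / (m.factorial : ℚ) := by
  simp [invFact]

lemma invFact_of_neg {m : ℤ} (h : m < 0) : invFact m = 0 := by
  simp [invFact, not_le.mpr h]

lemma invFact_sub_one (m : ℤ) : invFact (m - 1) = m * invFact m := by
  rcases lt_trichotomy m 0 with h | h | h
  · rw [invFact_of_neg h, invFact_of_neg (by omega), mul_zero]
  · subst h
    simp [invFact]
  · obtain ⟨p, rfl⟩ : ∃ p : ℕ, m = p + 1 := ⟨(m - 1).toNat, by omega⟩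
    rw [add_sub_cancel_right, invFact_natCast]
    have := invFact_natCast (p + 1)
    push_cast at this ⊢
    rw [this, Nat.factorial_succ]
    push_cast
    have : (p.factorial : ℚ) ≠ 0 := by positivity
    field_simp

/-- Aitken's determinant `det (1 / (m i - i + j)!)` with `k` rows attached to the integer
row lengths `m 0, …, m (k - 1)`. -/
def aitken (k : ℕ) (m : ℕ → ℤ) : ℚ :=
  (Matrix.of fun i j : Fin k => invFact (m i - (i : ℕ) + (j : ℕ))).det

/-- Scaling the entries of one row at a time by weights `a i + b j` and summing over the row
multiplies the determinant by `∑ a + ∑ b`: in the Leibniz expansion, the term of a permutation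
`σ` acquires the factor `∑ (a (σ i) + b i)`, which does not depend on `σ`. -/
lemma sum_det_scale_row {k : ℕ} (A : Matrix (Fin k) (Fin k) ℚ) (a b : Fin k → ℚ) :
    ∑ r, (Matrix.of fun i j => if i = r then (a i + b j) * A i j else A i j).det
      = (∑ i, a i + ∑ i, b i) * A.det := by
  simp only [Matrix.det_apply', Matrix.of_apply]
  rw [sum_comm, mul_sum]
  refine sum_congr rfl fun σ _ => ?_
  rw [← mul_sum]
  have h : ∀ r, (∏ i, if σ i = r then (a (σ i) + b i) * A (σ i) i else A (σ i) i)
      = (a r + b (σ.symm r)) * ∏ i, A (σ i) i := by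
    intro r
    have : ∀ i, (if σ i = r then (a (σ i) + b i) * A (σ i) i else A (σ i) i)
        = (if σ.symm r = i then (a r + b (σ.symm r)) else 1) * A (σ i) i := by
      intro i
      by_cases hi : σ i = r
      · subst hi
        simp
      · have : σ.symm r ≠ i := fun h => hi (by rw [← h, Equiv.apply_symm_apply])
        simp [hi, this]
    simp_rw [this, prod_mul_distrib]
    simp
  simp_rw [h, ← sum_mul, sum_add_distrib]
  rw [Equiv.sum_comp σ.symm b]
  ring

/-- The analytic counterpart of the branching rule for standard tableaux. -/
lemma sum_aitken_update (k : ℕ) (m : ℕ → ℤ) :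
    ∑ r ∈ range k, aitken k (Function.update m r (m r - 1))
      = (∑ r ∈ range k, (m r : ℚ)) * aitken k m := by
  have key := sum_det_scale_row
    (Matrix.of fun i j : Fin k => invFact (m i - (i : ℕ) + (j : ℕ)))
    (fun i => (m i : ℚ) - ((i : ℕ) : ℚ)) (fun j => ((j : ℕ) : ℚ))
  rw [sum_sub_distrib, sub_add_cancel] at key
  rw [Finset.sum_range, Finset.sum_range, aitken, ← key]
  refine sum_congr rfl fun r _ => ?_
  rw [aitken]
  congr 1
  ext i j
  simp only [Matrix.of_apply]
  by_cases h : i = r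
  · subst h
    have := invFact_sub_one (m i - (i : ℕ) + (j : ℕ))
    push_cast at this
    simp only [Function.update_self, if_true, ← this]
    congr 1
    ring
  · have h' : (i : ℕ) ≠ r := fun e => h (Fin.ext e)
    simp [h, h']

/-- If two consecutive row lengths agree, shortening the upper one produces two equal rows. -/
lemma aitken_update_eq_zero_of_eq {k r : ℕ} {m : ℕ → ℤ} (hr : r + 1 < k) (h : m (r + 1) = m r) :
    aitken k (Function.update m r (m r - 1)) = 0 := by
  rw [aitken]
  refine Matrix.det_zero_of_row_eq (i := ⟨r, by omega⟩) (j := ⟨r + 1, hr⟩) (by simp) ?_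
  ext j
  simp only [Matrix.of_apply, Function.update_self]
  rw [Function.update_of_ne (by simp), h]
  congr 1
  push_cast
  ring

/-- If the bottom row is empty, shortening it produces a zero row. -/
lemma aitken_update_eq_zero_of_last {k r : ℕ} {m : ℕ → ℤ} (hr : r + 1 = k) (h : m r = 0) :
    aitken k (Function.update m r (m r - 1)) = 0 := by
  rw [aitken]
  refine Matrix.det_eq_zero_of_row_eq_zero ⟨r, by omega⟩ fun j => ?_
  simp only [Matrix.of_apply, Function.update_self]
  apply invFact_of_neg
  have := j.2
  omega

lemma aitken_zero {k : ℕ} {m : ℕ → ℤ} (h : ∀ i < k, m i = 0) : aitken k m = 1 := by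
  rw [aitken, Matrix.det_of_isUpperTriangular]
  · refine prod_eq_one fun i _ => ?_
    simp [h i i.2, invFact]
  · intro i j hij
    have : (j : ℕ) < i := hij
    simp only [Matrix.of_apply, h i i.2]
    exact invFact_of_neg (by omega)

/-- On a rectangle, Aitken's determinant becomes a Vandermonde determinant at the consecutive
points `n, n + 1, …, n + k - 1` after extracting `1 / (n + i)!` from each row. -/
lemma aitken_const (k n : ℕ) (hk : 1 ≤ k) :
    aitken k (fun _ => (n : ℤ)) * ∏ i ∈ range k, ((n + i).factorial : ℚ)
      = ∏ i ∈ range k, (i.factorial : ℚ) := by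
  obtain ⟨k, rfl⟩ : ∃ p, k = p + 1 := ⟨k - 1, by omega⟩
  have hV : (Matrix.of fun i j : Fin (k + 1) => (((n + i : ℕ).descFactorial j : ℕ) : ℚ)).det
      = (k.superFactorial : ℚ) := by
    rw [← Matrix.det_vandermonde_id_eq_superFactorial,
      ← Matrix.det_vandermonde_add _ (n : ℚ),
      Matrix.det_eval_matrixOfPolynomials_eq_det_vandermonde _
        (fun i => descPochhammer ℚ i) (fun i => descPochhammer_natDegree ℚ i)
        (fun i => monic_descPochhammer ℚ i)]
    congr 1
    ext i j
    simp only [Matrix.of_apply]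
    rw [← descPochhammer_eval_eq_descFactorial]
    push_cast
    rw [add_comm]
  have hS : ∏ i ∈ range (k + 1), (i.factorial : ℚ) = (k.superFactorial : ℚ) := by
    rw [← Nat.prod_range_succ_factorial]
    push_cast
    rfl
  rw [hS, ← hV, aitken,
    ← Matrix.det_submatrix_equiv_self Fin.revPerm, mul_comm, Finset.prod_range,
    ← Matrix.det_mul_column]
  congr 1
  ext i j
  simp only [Matrix.of_apply, Matrix.submatrix_apply, Fin.revPerm_apply, Fin.val_rev]
  have hi := i.2
  have hj := j.2
  have e : (n : ℤ) - ((k + 1 - (i + 1) : ℕ) : ℤ) + ((k + 1 - (j + 1) : ℕ) : ℤ)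
      = (n + i : ℕ) - (j : ℕ) := by omega
  rw [e]
  rcases le_or_gt (j : ℕ) (n + i) with h | h
  · rw [← Nat.cast_sub h, invFact_natCast, ← Nat.factorial_mul_descFactorial h]
    have : (((n + i - j : ℕ).factorial : ℕ) : ℚ) ≠ 0 := by positivity
    push_cast
    field_simp
  · rw [invFact_of_neg (by omega), Nat.descFactorial_eq_zero_iff_lt.mpr h]
    simp

/-! ### Fillings of a set of cells and the branching rule -/

/-- The order constraints on a standard filling: `a` lies strictly to the left of `b` in the same
row, or strictly above `b` in the same column. -/
def Precedes (a b : ℕ × ℕ) : Prop :=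
  a.1 = b.1 ∧ a.2 < b.2 ∨ a.2 = b.2 ∧ a.1 < b.1

open Classical in
/-- The standard fillings of a finite set `S` of cells, encoded as the lists of all the cells of
`S` in increasing order of their entries. -/
noncomputable def fillings (S : Finset (ℕ × ℕ)) : Finset (List (ℕ × ℕ)) :=
  (Multiset.lists S.val).toFinset.filter (List.Pairwise fun a b => ¬ Precedes b a)

lemma mem_fillings {S : Finset (ℕ × ℕ)} {l : List (ℕ × ℕ)} :
    l ∈ fillings S ↔ S.val = (l : Multiset (ℕ × ℕ)) ∧ l.Pairwise fun a b => ¬ Precedes b a := by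
  simp [fillings, Multiset.mem_lists_iff]

lemma fillings_empty : fillings ∅ = {[]} := by
  ext l
  rw [mem_fillings, mem_singleton]
  constructor
  · rintro ⟨h, -⟩
    simpa [eq_comm] using h
  · rintro rfl
    simp

open Classical in
/-- The branching rule: the largest entry of a standard filling sits in a cell that precedes no
other cell, and deleting this cell leaves a standard filling. -/
lemma card_fillings {S : Finset (ℕ × ℕ)} (hS : S.Nonempty) :
    (fillings S).card = ∑ c ∈ S with ∀ a ∈ S, ¬ Precedes c a, (fillings (S.erase c)).card := by
  have h : fillings S = (S.filter fun c => ∀ a ∈ S, ¬ Precedes c a).biUnion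
      fun c => (fillings (S.erase c)).image (· ++ [c]) := by
    ext l
    simp only [mem_biUnion, mem_image, mem_filter, mem_fillings]
    constructor
    · rintro ⟨hv, hp⟩
      rcases List.eq_nil_or_concat l with rfl | ⟨l', c, rfl⟩
      · simp at hv
        exact absurd hv hS.ne_empty
      · rw [List.concat_eq_append] at hv hp ⊢
        have hm : ∀ a, a ∈ S ↔ a ∈ l' ∨ a = c := by
          intro a
          rw [← Finset.mem_val, hv]
          simp
        rw [List.pairwise_append] at hp
        refine ⟨c, ⟨(hm c).2 (Or.inr rfl), ?_⟩, l', ⟨?_, hp.1⟩, rfl⟩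
        · intro a ha
          rcases (hm a).1 ha with h | rfl
          · exact hp.2.2 a h c (by simp)
          · simp [Precedes]
        · rw [Finset.erase_val, hv, ← Multiset.coe_add, add_comm]
          simp
    · rintro ⟨c, ⟨hc, hmax⟩, l', ⟨hv, hp⟩, rfl⟩
      constructor
      · rw [← Multiset.cons_erase (show c ∈ S.val from hc), ← Finset.erase_val, hv,
          ← Multiset.coe_add, add_comm]
        simp
      · rw [List.pairwise_append]
        refine ⟨hp, by simp, fun a ha b hb => ?_⟩
        rw [List.mem_singleton.1 hb]
        refine hmax a (Finset.mem_of_mem_erase (a := c) ?_)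
        rw [← Finset.mem_val, hv]
        simpa using ha
  rw [h, card_biUnion]
  · refine sum_congr rfl fun c _ => card_image_of_injective _ fun l₁ l₂ h => ?_
    simpa using h
  · intro c₁ _ c₂ _ hne
    simp only [Function.onFun]
    rw [disjoint_left]
    simp only [mem_image]
    rintro _ ⟨l₁, _, rfl⟩ ⟨l₂, _, h⟩
    have := List.append_inj_right' h rfl
    simp at this
    exact hne this.symm

/-! ### Corners of Young diagrams -/

/-- `S` is the Young diagram with `k` rows (some possibly empty) of lengths
`μ 0 ≥ μ 1 ≥ ⋯ ≥ μ (k - 1)`. -/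
def IsDiagram (k : ℕ) (μ : ℕ → ℕ) (S : Finset (ℕ × ℕ)) : Prop :=
  (∀ i j, i ≤ j → j < k → μ j ≤ μ i) ∧ ∀ p, p ∈ S ↔ p.1 < k ∧ p.2 < μ p.1

lemma IsDiagram.card {k : ℕ} {μ : ℕ → ℕ} {S : Finset (ℕ × ℕ)} (h : IsDiagram k μ S) :
    S.card = ∑ r ∈ range k, μ r := by
  have : S = (range k).biUnion fun i => (range (μ i)).image fun j => (i, j) := by
    ext ⟨i, j⟩
    rw [h.2]
    simp
  rw [this, card_biUnion]
  · refine sum_congr rfl fun i _ => ?_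
    rw [card_image_of_injective _ (Prod.mk_right_injective i), card_range]
  · intro a _ b _ hab
    simp only [Function.onFun]
    rw [disjoint_left]
    simp only [mem_image]
    rintro _ ⟨_, _, rfl⟩ ⟨_, _, h⟩
    exact hab (congrArg Prod.fst h).symm

/-- The row `r` can lose its last cell: it is nonempty, and longer than the next row if there is
one. -/
def Removable (k : ℕ) (μ : ℕ → ℕ) (r : ℕ) : Prop :=
  0 < μ r ∧ (r + 1 < k → μ (r + 1) < μ r)

/-- The cells that precede no other cell are the ends of the removable rows. -/
lemma IsDiagram.maximal_iff {k : ℕ} {μ : ℕ → ℕ} {S : Finset (ℕ × ℕ)} (h : IsDiagram k μ S)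
    (c : ℕ × ℕ) : (c ∈ S ∧ ∀ a ∈ S, ¬ Precedes c a) ↔
      c.1 < k ∧ Removable k μ c.1 ∧ c.2 = μ c.1 - 1 := by
  obtain ⟨i, j⟩ := c
  obtain ⟨hμ, hS⟩ := h
  constructor
  · rintro ⟨hc, hmax⟩
    have hc' := (hS _).1 hc
    have h1 : ¬ (i < k ∧ j + 1 < μ i) := fun ha =>
      hmax (i, j + 1) ((hS _).2 ha) (Or.inl ⟨rfl, Nat.lt_succ_self j⟩)
    have h2 : ¬ (i + 1 < k ∧ j < μ (i + 1)) := fun ha =>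
      hmax (i + 1, j) ((hS _).2 ha) (Or.inr ⟨rfl, Nat.lt_succ_self i⟩)
    simp only at hc'
    simp only [Removable]
    refine ⟨hc'.1, ⟨by omega, fun hi => ?_⟩, ?_⟩
    · have := hμ i (i + 1) (by omega) hi
      omega
    · omega
  · rintro ⟨hi, ⟨h0, h1⟩, h2⟩
    simp only at hi h0 h1 h2
    refine ⟨(hS _).2 ⟨hi, by simp only; omega⟩, ?_⟩
    rintro ⟨i', j'⟩ ha hp
    rw [hS] at ha
    simp only [Precedes] at ha hp
    rcases hp with ⟨rfl, hp⟩ | ⟨rfl, hp⟩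
    · omega
    · have := hμ (i + 1) i' hp ha.1
      have := h1 (by omega)
      omega

lemma IsDiagram.erase {k : ℕ} {μ : ℕ → ℕ} {S : Finset (ℕ × ℕ)} (h : IsDiagram k μ S)
    {r : ℕ} (hr : Removable k μ r) :
    IsDiagram k (Function.update μ r (μ r - 1)) (S.erase (r, μ r - 1)) := by
  obtain ⟨hμ, hS⟩ := h
  obtain ⟨h0, h1⟩ := hr
  constructor
  · intro i j hij hj
    have := hμ i j hij hj
    simp only [Function.update_apply]
    split_ifs with hjr hir hir
    · exact le_rfl
    · subst hjr
      omega
    · subst hir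
      have := hμ (i + 1) j (by omega) hj
      have := h1 (by omega)
      omega
    · exact this
  · rintro ⟨i, j⟩
    rw [mem_erase, hS]
    simp only [Function.update_apply, ne_eq, Prod.mk.injEq]
    split_ifs with hir
    · subst hir
      omega
    · tauto

/-! ### Aitken's formula -/

/-- Aitken's formula for the number of standard fillings of a diagram. Both sides satisfy the
branching rule; rows that are not removable contribute zero to the determinantal side. -/
theorem card_fillings_eq_aitken {k : ℕ} {μ : ℕ → ℕ} {S : Finset (ℕ × ℕ)}
    (h : IsDiagram k μ S) :
    ((fillings S).card : ℚ) = S.card.factorial * aitken k (fun i => (μ i : ℤ)) := by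
  classical
  induction hN : S.card generalizing S μ with
  | zero =>
    obtain rfl := Finset.card_eq_zero.1 hN
    rw [aitken_zero, fillings_empty]
    · simp
    · have := h.card
      rw [hN, eq_comm, sum_eq_zero_iff] at this
      intro i hi
      exact_mod_cast this i (mem_range.2 hi)
  | succ N ih =>
    have hne : S.Nonempty := card_pos.1 (by omega)
    have hsum : (∑ r ∈ range k, (((μ r : ℕ) : ℤ) : ℚ)) = N + 1 := by
      have := h.card
      rw [hN] at this
      exact_mod_cast this.symm
    have key := sum_aitken_update k (fun i => (μ i : ℤ))
    rw [hsum] at key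
    rw [card_fillings hne, Nat.factorial_succ]
    push_cast
    rw [mul_comm ((N : ℚ) + 1), mul_assoc, ← key, mul_sum]
    have hcorner : (S.filter fun c => ∀ a ∈ S, ¬ Precedes c a)
        = ((range k).filter (Removable k μ)).image fun r => (r, μ r - 1) := by
      ext ⟨i, j⟩
      rw [mem_filter, h.maximal_iff]
      simp only [mem_image, mem_filter, mem_range, Prod.mk.injEq]
      constructor
      · rintro ⟨h1, h2, h3⟩
        exact ⟨i, ⟨h1, h2⟩, rfl, h3.symm⟩
      · rintro ⟨_, ⟨h1, h2⟩, rfl, h3⟩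
        exact ⟨h1, h2, h3.symm⟩
    rw [hcorner, sum_image (fun a _ b _ hab => congrArg Prod.fst hab), sum_filter]
    refine sum_congr rfl fun r hr => ?_
    rw [mem_range] at hr
    split_ifs with hrem
    · have hmem : (r, μ r - 1) ∈ S := (h.2 _).2 ⟨hr, Nat.sub_lt hrem.1 one_pos⟩
      rw [ih (h.erase hrem) (by rw [card_erase_of_mem hmem, hN]; rfl)]
      congr 2
      funext i
      have := hrem.1
      by_cases hi : i = r
      · subst hi
        simp only [Function.update_self]
        omega
      · simp [hi]
    · symm
      apply mul_eq_zero_of_right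
      by_cases hlast : r + 1 < k
      · refine aitken_update_eq_zero_of_eq hlast ?_
        have := h.1 r (r + 1) (by omega) hlast
        simp only [Removable] at hrem
        simp only [Nat.cast_inj]
        by_contra hne
        exact hrem ⟨by omega, fun _ => by omega⟩
      · refine aitken_update_eq_zero_of_last (by omega) ?_
        simp only [Removable, hlast, false_imp_iff, and_true] at hrem
        exact_mod_cast (by omega : μ r = 0)

/-! ### Standard tableaux as lists of cells -/

/-- A standard tableau amounts to the list of its cells in increasing order of their entries:
the entry of a cell is its position in the list. -/
lemma sytCount_eq_card_fillings (L : List ℕ) (hL : (cells L).card = L.sum) :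
    sytCount L = (fillings (cells L)).card := by
  classical
  have hlen : ∀ l ∈ fillings (cells L), l.length = L.sum := by
    intro l hl
    rw [← hL, Finset.card, (mem_fillings.1 hl).1, Multiset.coe_card]
  have hnd : ∀ l ∈ fillings (cells L), l.Nodup := by
    intro l hl
    rw [← Multiset.coe_nodup, ← (mem_fillings.1 hl).1]
    exact (cells L).nodup
  have hmem : ∀ l ∈ fillings (cells L), ∀ a, a ∈ l ↔ a ∈ cells L := by
    intro l hl a
    rw [← Finset.mem_val, (mem_fillings.1 hl).1, Multiset.mem_coe]
  have hlt : ∀ l ∈ fillings (cells L), ∀ a ∈ cells L, l.idxOf a < L.sum := by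
    intro l hl a ha
    rw [← hlen l hl]
    exact List.idxOf_lt_length_of_mem ((hmem l hl a).2 ha)
  have hmono : ∀ l ∈ fillings (cells L), ∀ a ∈ cells L, ∀ b ∈ cells L, Precedes a b →
      l.idxOf a < l.idxOf b := by
    intro l hl a ha b hb hab
    by_contra hcon
    have hla := List.idxOf_lt_length_of_mem ((hmem l hl a).2 ha)
    have hlb := List.idxOf_lt_length_of_mem ((hmem l hl b).2 hb)
    have hne : l.idxOf a ≠ l.idxOf b := by
      intro e
      have := (List.idxOf_inj ((hmem l hl a).2 ha)).1 e
      subst this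
      simp [Precedes] at hab
    have := List.pairwise_iff_getElem.1 (mem_fillings.1 hl).2 _ _ hlb hla (by omega)
    simp only [List.getElem_idxOf] at this
    exact this hab
  let F : fillings (cells L) → {f : cells L → Fin L.sum // IsSYT L f} := fun l =>
    ⟨fun a => ⟨l.1.idxOf a.1, hlt l.1 l.2 a.1 a.2⟩, by
      refine ⟨?_, ?_, ?_⟩
      · rw [Fintype.bijective_iff_injective_and_card]
        refine ⟨fun a b hab => ?_, by simp [hL]⟩
        simp only [Fin.mk.injEq] at hab
        exact Subtype.ext ((List.idxOf_inj ((hmem l.1 l.2 a).2 a.2)).1 hab)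
      · exact fun a b h1 h2 => hmono l.1 l.2 a a.2 b b.2 (Or.inl ⟨h1, h2⟩)
      · exact fun a b h1 h2 => hmono l.1 l.2 a a.2 b b.2 (Or.inr ⟨h1, h2⟩)⟩
  have hF : Function.Bijective F := by
    constructor
    · rintro ⟨l₁, h₁⟩ ⟨l₂, h₂⟩ h
      have hidx : ∀ a ∈ cells L, l₁.idxOf a = l₂.idxOf a := by
        intro a ha
        have := congrFun (congrArg Subtype.val h) ⟨a, ha⟩
        simpa [F] using this
      refine Subtype.ext (List.ext_getElem (by rw [hlen _ h₁, hlen _ h₂]) fun i hi₁ hi₂ => ?_)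
      have := hidx l₁[i] ((hmem _ h₁ _).1 (List.getElem_mem hi₁))
      rw [(hnd _ h₁).idxOf_getElem] at this
      change l₁[i] = l₂[i]
      generalize l₁[i] = x at this ⊢
      subst this
      exact (List.getElem_idxOf _).symm
    · rintro ⟨f, hbij, hrow, hcol⟩
      let e := Equiv.ofBijective f hbij
      have he : ∀ a, e a = f a := fun _ => rfl
      have hinj : Function.Injective fun i => (e.symm i : ℕ × ℕ) :=
        Subtype.val_injective.comp e.symm.injective
      have hnd' := List.nodup_ofFn.2 hinj
      have hl : List.ofFn (fun i => (e.symm i : ℕ × ℕ)) ∈ fillings (cells L) := by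
        rw [mem_fillings]
        constructor
        · rw [(cells L).nodup.ext (Multiset.coe_nodup.2 hnd')]
          intro a
          rw [Multiset.mem_coe, List.mem_ofFn, Finset.mem_val]
          constructor
          · exact fun ha => ⟨e ⟨a, ha⟩, by simp⟩
          · rintro ⟨i, rfl⟩
            exact (e.symm i).2
        · rw [List.pairwise_ofFn]
          intro i j hij hp
          have : f (e.symm j) < f (e.symm i) := by
            rcases hp with hp | hp
            · exact hrow _ _ hp.1 hp.2
            · exact hcol _ _ hp.1 hp.2
          rw [← he, ← he, Equiv.apply_symm_apply, Equiv.apply_symm_apply] at this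
          exact lt_asymm this hij
      refine ⟨⟨_, hl⟩, Subtype.ext (funext fun a => Fin.ext ?_)⟩
      simp only [F]
      have hlen' : (f a : ℕ) < (List.ofFn fun i => (e.symm i : ℕ × ℕ)).length := by simp
      have := hnd'.idxOf_getElem _ hlen'
      rw [List.getElem_ofFn] at this
      simpa [← he] using this
  rw [sytCount, ← Nat.card_congr (Equiv.ofBijective F hF), Nat.card_eq_fintype_card,
    Fintype.card_coe]

/-! ### The rectangle -/

lemma isDiagram_rectangle (k n : ℕ) :
    IsDiagram k (fun _ => n) (cells (List.replicate k n)) := by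
  refine ⟨fun _ _ _ _ => le_rfl, ?_⟩
  have hmax : 0 < k → (List.replicate k n).foldr max 0 = n := by
    induction k with
    | zero => simp
    | succ k ih =>
      intro _
      rcases Nat.eq_zero_or_pos k with rfl | hk
      · simp
      · rw [List.replicate_succ, List.foldr_cons, ih hk, max_self]
  rintro ⟨i, j⟩
  simp only [cells, mem_filter, mem_product, mem_range, List.length_replicate]
  constructor
  · rintro ⟨⟨hi, hj⟩, -⟩
    rw [hmax (by omega)] at hj
    exact ⟨hi, hj⟩
  · rintro ⟨hi, hj⟩
    rw [hmax (by omega)]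
    refine ⟨⟨hi, hj⟩, ?_⟩
    simpa [List.getD, hi] using hj

/-- The number of standard Young tableaux of the rectangular shape with `k` rows
of length `n` equals `(1!·2!⋯(k-1)!)·(nk)!/(n!·(n+1)!⋯(n+k-1)!)`. -/
theorem syt_rectangular_count (k n : ℕ) (hk : 1 ≤ k) :
    sytCount (List.replicate k n) =
      (∏ i ∈ Finset.range k, Nat.factorial i) * Nat.factorial (n * k) /
        ∏ i ∈ Finset.range k, Nat.factorial (n + i) := by
  have hd := isDiagram_rectangle k n
  have hcard : (cells (List.replicate k n)).card = n * k := by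
    rw [hd.card]
    simp [mul_comm]
  have hmain := card_fillings_eq_aitken hd
  rw [← sytCount_eq_card_fillings _ (by rw [hcard]; simp [mul_comm]), hcard] at hmain
  -- Dividing the numerator exactly, so that the natural-number quotient is not truncated.
  refine (Nat.div_eq_of_eq_mul_left (prod_pos fun i _ => Nat.factorial_pos _) ?_).symm
  have : ((∏ i ∈ range k, i.factorial : ℕ) : ℚ) * (n * k).factorial
      = sytCount (List.replicate k n) * (∏ i ∈ range k, (n + i).factorial : ℕ) := by
    push_cast
    rw [hmain, ← aitken_const k n hk]
    ring
  exact_mod_cast this
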